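/- arXiv:1710.02996 — 5 statements merged into one kernel-verified Lean document; each statement's English description precedes it below -/
import Mathlib

section
/- Let u and w be finite lists of integers and let a, b be integers. Then M(u ++ [a+1, 1, b+1] ++ w) = M(u ++ [a, b] ++ w); that is, the operation of the first type, which inserts a 1 between two consecutive entries and increases both neighboring entries by 1, leaves the matrix M unchanged. -/
open Matrix

def elemMat (a : ℤ) : Matrix (Fin 2) (Fin 2) ℤ := !![a, -1; 1, 0]

/-- `M (a₁ :: ... :: aₙ)` is the product `E(aₙ) ⋯ E(a₁)` with the factor for `a₁` rightmost. -/
def M : List ℤ → Matrix (Fin 2) (Fin 2) ℤ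
  | [] => 1
  | a :: t => M t * elemMat a


/-- Operation of the first type leaves the matrix `M` unchanged. -/
theorem op1_preserves_M (u w : List ℤ) (a b : ℤ) :
    M (u ++ [a + 1, 1, b + 1] ++ w) = M (u ++ [a, b] ++ w) := by
  have key : elemMat (b + 1) * elemMat 1 * elemMat (a + 1) = elemMat b * elemMat a := by
    ext i j
    fin_cases i <;> fin_cases j <;> simp [elemMat, Matrix.mul_apply, Fin.sum_univ_two] <;> ring
  induction u with
  | nil =>
    simp only [List.nil_append, List.cons_append, M]
    rw [Matrix.mul_assoc, Matrix.mul_assoc, ← Matrix.mul_assoc (elemMat (b + 1)), key,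
      Matrix.mul_assoc]
  | cons x t ih =>
    simp only [List.cons_append, M]
    rw [ih]
end

section
/- Let u and w be finite lists of integers and let a', a'' be integers. Then M(u ++ [a', 1, 1, a''] ++ w) = −M(u ++ [a' + a'' − 1] ++ w); that is, the operation of the second type, which replaces an entry a by a', 1, 1, a'' with a' + a'' = a + 1, changes the sign of the matrix M. -/
open Matrix

/-- Operation of the second type changes the sign of the matrix `M`. -/
theorem op2_negates_M (u w : List ℤ) (a' a'' : ℤ) :
    M (u ++ [a', 1, 1, a''] ++ w) = -M (u ++ [a' + a'' - 1] ++ w) := by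
  induction u with
  | nil =>
    have h : elemMat a'' * (elemMat 1 * (elemMat 1 * elemMat a')) = -elemMat (a' + a'' - 1) := by
      ext i j
      fin_cases i <;> fin_cases j <;> simp [elemMat] <;> ring
    simp only [List.nil_append, List.cons_append, M, Matrix.mul_assoc]
    rw [h, Matrix.mul_neg]
  | cons b t ih =>
    simp only [List.cons_append, M] at ih ⊢
    rw [ih, Matrix.neg_mul]
end

section
/- Let n ≥ 1 and let (a_1, ..., a_n) be a sequence of positive integers that is a solution of Problem I, of Problem II, or of Problem III. Then there exists at least one index i with 1 ≤ i ≤ n such that a_i = 1. -/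
open Matrix

theorem M_invariant (l : List ℤ) (h2 : ∀ x ∈ l, 2 ≤ x) :
    0 ≤ M l 1 0 ∧ 1 ≤ M l 1 0 + M l 1 1 ∧ 1 ≤ M l 0 0 - M l 1 0 ∧
    0 ≤ M l 0 0 - M l 1 0 + (M l 0 1 - M l 1 1) ∧ (l ≠ [] → 1 ≤ M l 1 0) := by
  induction l with
  | nil => simp [M]
  | cons a t ih =>
    obtain ⟨h1, h3, h4, h5, -⟩ := ih (fun x hx => h2 x (List.mem_cons_of_mem _ hx))
    have ha : 2 ≤ a := h2 a List.mem_cons_self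
    simp only [M, elemMat, Matrix.mul_apply, Fin.sum_univ_two, Matrix.of_apply, Matrix.cons_val',
      Matrix.cons_val_zero, Matrix.cons_val_one, Matrix.cons_val_fin_one]
    generalize M t 0 0 = p at *
    generalize M t 0 1 = q at *
    generalize M t 1 0 = r at *
    generalize M t 1 1 = s at *
    have e1 : 0 ≤ r * (a - 2) := mul_nonneg h1 (by linarith)
    have e2 : 0 ≤ (p - r) * (a - 2) := mul_nonneg (by linarith) (by linarith)
    refine ⟨?_, ?_, ?_, ?_, fun _ => ?_⟩ <;> nlinarith

/-- Every solution of Problem I, II or III contains an entry equal to 1. -/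
theorem exists_one_entry (l : List ℤ) (hne : l ≠ []) (hpos : ∀ x ∈ l, 0 < x)
    (h : M l = 1 ∨ M l = -1 ∨ (M l) ^ 2 = -1) :
    (1 : ℤ) ∈ l := by
  by_contra hn
  have h2 : ∀ x ∈ l, 2 ≤ x := by
    intro x hx
    have h0 := hpos x hx
    have h1 : x ≠ 1 := fun e => hn (e ▸ hx)
    omega
  obtain ⟨-, h3, h4, -, h5⟩ := M_invariant l h2
  have h5 := h5 hne
  rcases h with h | h | h
  · simp [h] at h5
  · simp [h] at h5
  · have e := congrFun (congrFun h 1) 0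
    simp [pow_two, Matrix.mul_apply, Fin.sum_univ_two] at e
    nlinarith
end

section
/- Let (a_1, ..., a_n) be a sequence of positive integers with M(a_1, ..., a_n) = Id (a solution of Problem I). Then a_i ≤ n − 5 for every index i. -/
open Matrix

def GoodL (l : List ℤ) : Prop :=
  (M l = 1 → ∀ x ∈ l, x ≤ (l.length : ℤ) - 5) ∧ (M l = -1 → ∀ x ∈ l, x ≤ (l.length : ℤ) - 2)

lemma M_append (s t : List ℤ) : M (s ++ t) = M t * M s := by
  induction s with
  | nil => simp [M]
  | cons a s ih => simp [M, ih, Matrix.mul_assoc]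

lemma M_rot {e : Matrix (Fin 2) (Fin 2) ℤ} (he : e = 1 ∨ e = -1) (s t : List ℤ)
    (h : M (s ++ t) = e) : M (t ++ s) = e := by
  rw [M_append] at h ⊢
  rcases he with rfl | rfl
  · exact mul_eq_one_comm.mp h
  · have h2 : M t * (-M s) = 1 := by rw [Matrix.mul_neg, h, neg_neg]
    have h3 := mul_eq_one_comm.mp h2
    rw [Matrix.neg_mul] at h3
    rw [← h3, neg_neg]

lemma good_rot (s t : List ℤ) (h : GoodL (t ++ s)) : GoodL (s ++ t) := by
  refine ⟨fun hm x hx => ?_, fun hm x hx => ?_⟩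
  · have := h.1 (M_rot (Or.inl rfl) s t hm) x (by simp at hx ⊢; tauto)
    simp at this ⊢; linarith
  · have := h.2 (M_rot (Or.inr rfl) s t hm) x (by simp at hx ⊢; tauto)
    simp at this ⊢; linarith

lemma M_red1 (a b : ℤ) (s : List ℤ) : M (a :: 1 :: b :: s) = M ((a-1) :: (b-1) :: s) := by
  simp only [M, Matrix.mul_assoc]
  congr 1
  ext i j
  fin_cases i <;> fin_cases j <;> simp [elemMat, Matrix.mul_apply, Fin.sum_univ_two] <;> ring

lemma M_red2 (a c : ℤ) (s : List ℤ) : M (a :: 1 :: 1 :: c :: s) = - M ((a+c-1) :: s) := by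
  simp only [M, Matrix.mul_assoc]
  rw [← Matrix.mul_neg]
  congr 1
  ext i j
  fin_cases i <;> fin_cases j <;> simp [elemMat, Matrix.mul_apply, Fin.sum_univ_two] <;> ring

lemma good_red1 (a b : ℤ) (s : List ℤ) (ha : 2 ≤ a) (h : GoodL ((a-1) :: (b-1) :: s)) :
    GoodL (a :: 1 :: b :: s) := by
  unfold GoodL at *
  rw [M_red1]
  refine ⟨fun hm => ?_, fun hm => ?_⟩
  · have := h.1 hm
    simp at this ⊢
    refine ⟨by linarith, by linarith, by linarith, fun x hx => ?_⟩
    linarith [this.2.2 x hx]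
  · have := h.2 hm
    simp at this ⊢
    refine ⟨by linarith, by linarith, by linarith, fun x hx => ?_⟩
    linarith [this.2.2 x hx]

lemma good_red2 (a c : ℤ) (s : List ℤ) (ha : 0 < a) (hc : 0 < c) (h : GoodL ((a+c-1) :: s)) :
    GoodL (a :: 1 :: 1 :: c :: s) := by
  unfold GoodL at *
  rw [M_red2]
  refine ⟨fun hm => ?_, fun hm => ?_⟩
  · have := h.2 (by rw [← hm, neg_neg])
    simp at this ⊢
    refine ⟨by linarith, by linarith, by linarith, fun x hx => ?_⟩
    linarith [this.2 x hx]
  · have := h.1 (by rw [← neg_inj, hm])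
    simp at this ⊢
    refine ⟨by linarith, by linarith, by linarith, fun x hx => ?_⟩
    linarith [this.2 x hx]

lemma good_three (a : ℤ) : GoodL [a, 1, 1] := by
  refine ⟨fun hm => ?_, fun hm => ?_⟩
  · have h0 := congrFun (congrFun hm 1) 1
    simp [M, elemMat, Matrix.mul_apply, Fin.sum_univ_two] at h0
  · have h0 := congrFun (congrFun hm 1) 0
    simp [M, elemMat, Matrix.mul_apply, Fin.sum_univ_two] at h0
    simp
    linarith

lemma M_ge_two (l : List ℤ) (h : ∀ x ∈ l, 2 ≤ x) :
    M l 1 1 < M l 1 0 + M l 1 1 + 1 ∧ 1 ≤ M l 1 0 + M l 1 1 ∧ (l ≠ [] → 1 ≤ M l 1 0) := by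
  induction l with
  | nil => simp [M]
  | cons a l ih =>
    have h2 := ih (fun x hx => h x (by simp [hx]))
    have ha := h a (by simp)
    simp [M, elemMat, Matrix.mul_apply, Fin.sum_univ_two]
    have : 0 ≤ (a - 2) * M l 1 0 := mul_nonneg (by linarith) (by linarith)
    refine ⟨?_, ?_, ?_⟩ <;> nlinarith

lemma good_all (n : ℕ) : ∀ l : List ℤ, l.length = n → (∀ x ∈ l, 0 < x) → GoodL l := by
  induction n using Nat.strong_induction_on with
  | _ n ih =>
  intro l hl hpos
  by_cases hnil : l = []
  · subst hnil; simp [GoodL]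
  by_cases h1 : (1:ℤ) ∈ l
  swap
  · have := (M_ge_two l (fun x hx => by
      have := hpos x hx
      have : x ≠ 1 := fun h => h1 (h ▸ hx)
      omega)).2.2 hnil
    constructor <;> intro hm <;> rw [hm] at this <;> simp at this
  -- two 1s in a row, with a predecessor
  have key : ∀ (a : ℤ) (s : List ℤ), s.length + 3 = n → (∀ x ∈ s, 0 < x) → 0 < a →
      GoodL (a :: 1 :: 1 :: s) := by
    intro a s hs hp ha
    rcases s with _ | ⟨c, s⟩
    · exact good_three a
    · have hc := hp c (by simp)
      refine good_red2 a c s ha hc (ih _ ?_ _ rfl ?_)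
      · simp at hs ⊢; omega
      · intro x hx
        rcases List.mem_cons.mp hx with rfl | hx
        · linarith
        · exact hp x (by simp [hx])
  obtain ⟨u, v, rfl⟩ := List.append_of_mem h1
  apply good_rot
  have hl' : (v ++ u).length + 1 = n := by simp at hl ⊢; omega
  have hp' : ∀ x ∈ v ++ u, 0 < x := fun x hx => hpos x (by simp at hx ⊢; tauto)
  rw [List.cons_append]
  generalize v ++ u = t at hl' hp'
  clear hl hpos hnil h1
  rcases List.eq_nil_or_concat' t with rfl | ⟨t, a, rfl⟩
  · constructor <;> intro hm <;> have h0 := congrFun (congrFun hm 1) 0 <;>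
      simp [M, elemMat] at h0
  have ha := hp' a (by simp)
  apply good_rot (1 :: t) [a]
  rcases t with _ | ⟨b, s⟩
  · constructor <;> intro hm <;> have h0 := congrFun (congrFun hm 1) 1 <;>
      have h2 := congrFun (congrFun hm 1) 0 <;>
      simp [M, elemMat, Matrix.mul_apply, Fin.sum_univ_two] at h0 h2
    omega
  have hb := hp' b (by simp)
  have hs : ∀ x ∈ s, 0 < x := fun x hx => hp' x (by simp [hx])
  have hlen : s.length + 3 = n := by simp at hl'; omega
  show GoodL (a :: 1 :: b :: s)
  by_cases hb1 : b = 1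
  · subst hb1; exact key a s hlen hs ha
  by_cases ha1 : a = 1
  · subst ha1
    rcases List.eq_nil_or_concat' s with rfl | ⟨s, d, rfl⟩
    · exact good_rot [1, 1] [b] (good_three b)
    · apply good_rot (1 :: 1 :: b :: s) [d]
      refine key d (b :: s) (by simp at hlen ⊢; omega) ?_ (hs d (by simp))
      intro x hx
      rcases List.mem_cons.mp hx with rfl | hx
      · exact hb
      · exact hs x (by simp [hx])
  refine good_red1 a b s (by omega) (ih _ ?_ _ rfl ?_)
  · simp; omega
  · intro x hx
    simp only [List.mem_cons] at hx
    rcases hx with rfl | rfl | hx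
    · omega
    · omega
    · exact hs x hx

/-- For a solution of Problem I, every entry satisfies `aᵢ ≤ n - 5`. -/
theorem problemI_entry_bound (l : List ℤ) (hpos : ∀ x ∈ l, 0 < x)
    (h : M l = 1) :
    ∀ x ∈ l, x ≤ (l.length : ℤ) - 5 := by
  exact (good_all _ l rfl hpos).1 h
end

section
/- For n ≤ 5, Problem I has no solutions: there are no positive integers a_1, ..., a_n with n ≤ 5 such that M(a_1, ..., a_n) = Id. For n = 6, Problem I has the unique solution (1, 1, 1, 1, 1, 1): for positive integers a_1, ..., a_6, one has M(a_1, ..., a_6) = Id if and only if a_1 = a_2 = ⋯ = a_6 = 1. -/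
open Matrix

def invMat (a : ℤ) : Matrix (Fin 2) (Fin 2) ℤ := !![0, 1; -1, a]

lemma inv_elem (a : ℤ) : invMat a * elemMat a = 1 := by
  ext i j
  fin_cases i <;> fin_cases j <;> simp [invMat, elemMat]

/-- Move the leftmost factor of a product to the other side. -/
lemma move (a : ℤ) (X Y : Matrix (Fin 2) (Fin 2) ℤ) (h : elemMat a * X = Y) :
    X = invMat a * Y := by
  rw [← h, ← Matrix.mul_assoc, inv_elem, Matrix.one_mul]

/-- Problem I has no solutions for `n ≤ 5`, and for `n = 6` its unique solution is
`(1,1,1,1,1,1)`. -/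
theorem problemI_small_n :
    (∀ l : List ℤ, l ≠ [] → l.length ≤ 5 → (∀ x ∈ l, 0 < x) → M l ≠ 1) ∧
    (∀ a1 a2 a3 a4 a5 a6 : ℤ,
      0 < a1 → 0 < a2 → 0 < a3 → 0 < a4 → 0 < a5 → 0 < a6 →
      (M [a1, a2, a3, a4, a5, a6] = 1 ↔
        a1 = 1 ∧ a2 = 1 ∧ a3 = 1 ∧ a4 = 1 ∧ a5 = 1 ∧ a6 = 1)) := by
  constructor
  · intro l hne hlen hpos h
    match l, hne, hlen, hpos, h with
    | [a], _, _, _, h =>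
      have h1 := congrFun (congrFun h 1) 0
      simp [M, elemMat] at h1
    | [a, b], _, _, hpos, h =>
      have hb : 0 < b := hpos b (by simp)
      have h1 := congrFun (congrFun h 0) 1
      simp [M, elemMat] at h1
      omega
    | [a, b, c], _, _, hpos, h =>
      have hb : 0 < b := hpos b (by simp)
      simp only [M, Matrix.one_mul, Matrix.mul_assoc] at h
      have h1 := congrFun (congrFun (move _ _ _ h) 0) 1
      simp [elemMat, invMat] at h1
      omega
    | [a, b, c, d], _, _, hpos, h =>
      have hb : 0 < b := hpos b (by simp)
      have hd : 0 < d := hpos d (by simp)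
      simp only [M, Matrix.one_mul, Matrix.mul_assoc] at h
      have h1 := congrFun (congrFun (move _ _ _ (move _ _ _ h)) 0) 1
      simp [elemMat, invMat] at h1
      omega
    | [a, b, c, d, e], _, _, hpos, h =>
      have hb : 0 < b := hpos b (by simp)
      have hc : 0 < c := hpos c (by simp)
      have he : 0 < e := hpos e (by simp)
      simp only [M, Matrix.one_mul, Matrix.mul_assoc] at h
      have h1 := congrFun (congrFun (move _ _ _ (move _ _ _ h)) 0) 1
      simp [elemMat, invMat] at h1
      nlinarith [mul_pos hb hc]
    | _ :: _ :: _ :: _ :: _ :: _ :: _, _, hlen, _, _ =>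
      simp at hlen
      omega
  · intro a b c d e f ha hb hc hd he hf
    constructor
    · intro h
      simp only [M, Matrix.one_mul, Matrix.mul_assoc] at h
      have h0 := move _ _ _ (move _ _ _ (move _ _ _ h))
      have h1 := congrFun (congrFun h0 0) 1
      have h2 := congrFun (congrFun h0 1) 0
      simp [elemMat, invMat] at h1 h2
      have k1 : b * c + e * f = 2 := by linarith
      have k2 : a * b + d * e = 2 := by linarith
      refine ⟨?_, ?_, ?_, ?_, ?_, ?_⟩ <;>
        nlinarith [mul_pos hb hc, mul_pos he hf, mul_pos ha hb, mul_pos hd he]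
    · rintro ⟨rfl, rfl, rfl, rfl, rfl, rfl⟩
      ext i j
      fin_cases i <;> fin_cases j <;> simp [M, elemMat]
end
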